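/- Linear convergence of VBPG under the level-set subdifferential error bound: let (x^k) be a VBPG sequence converging to x̄ and F̄ = F(x̄). Suppose the level-set subdifferential error bound holds at x̄ with exponent γ ∈ (0,1]: there exist η, ν, c₃ > 0 with infDist(x, [F ≤ F̄])^γ ≤ c₃·‖ξ‖ for every x ∈ 𝔅(x̄;η,ν) and every ξ ∈ ∂_P F(x). Then there exist β ∈ (0,1), k₀ ∈ ℕ and C > 0 such that: (1) F(x^{k+1}) − F̄ ≤ β·(F(x^k) − F̄) for all k ≥ k₀ (Q-linear convergence of values); (2) the series ∑_{k} (F(x^k) − F̄) converges; and (3) ‖x^k − x̄‖ ≤ C·(√β)^k for all k (R-linear convergence of the iterates). -/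

import Mathlib

open Set Metric Filter Topology
open scoped RealInnerProductSpace

noncomputable section

variable {E : Type*} [NormedAddCommGroup E] [InnerProductSpace ℝ E] [FiniteDimensional ℝ E]

/-- The proximal subdifferential of `ψ` at `x`. -/
def proxSubdiff (ψ : E → ℝ) (x : E) : Set E :=
  {ξ | ∃ ρ > (0:ℝ), ∃ η > (0:ℝ), ∀ y, ‖y - x‖ < η →
    ψ y ≥ ψ x + ⟪ξ, y - x⟫ - ρ * ‖y - x‖ ^ 2}

/-- The Bregman distance generated by `K` (with gradient `K'`). -/
def bregD (K : E → ℝ) (K' : E → E) (x y : E) : ℝ := K y - K x - ⟪K' x, y - x⟫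

/-- The Bregman proximal mapping: the set of global minimizers of
`y ↦ ⟪∇f x, y - x⟫ + g y + D(x,y)/ε`. -/
def bregT (f' : E → E) (g : E → ℝ) (K : E → ℝ) (K' : E → E) (ε : ℝ) (x : E) : Set E :=
  {y | ∀ z, ⟪f' x, y - x⟫ + g y + bregD K K' x y / ε ≤ ⟪f' x, z - x⟫ + g z + bregD K K' x z / ε}

/-- The Bregman proximal envelope. -/
def bregEnv (f : E → ℝ) (f' : E → E) (g : E → ℝ) (K : E → ℝ) (K' : E → E) (ε : ℝ) (x : E) : ℝ :=
  ⨅ y : E, (f x + ⟪f' x, y - x⟫ + g y + bregD K K' x y / ε)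

/-!
Write `F = f + g` and `s = ‖x (k+1) - x k‖`. Minimality of `x (k+1)` gives
`F (x (k+1)) + a * s ^ 2 ≤ F u + b * ‖u - x k‖ ^ 2` for *every* `u`, together with a proximal
subgradient of `F` at `x (k+1)` of norm at most `c * s`. Near the limit, where distances are at most
`1` and hence bounded by their `γ`-th powers, the error bound turns the latter into
`infDist (x k) [F ≤ F xbar] ≤ (1 + c₃ * c) * s`. Letting `u` run over `[F ≤ F xbar]` yields
`F (x (k+1)) - F xbar ≤ b * (1 + c₃ * c) ^ 2 * s ^ 2`, and `u = x k` bounds `a * s ^ 2` by the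
decrease of the values: this is the contraction of the values. The step lengths are dominated by
the square roots of the value gaps, so they are summable at the rate `√β`.
-/

section QuadraticBound

variable {V W : Type*} [NormedAddCommGroup V] [NormedSpace ℝ V]
  [NormedAddCommGroup W] [NormedSpace ℝ W]

theorem norm_sub_sub_apply_le_of_norm_fderiv_sub_le {f : V → W} {f' : V → V →L[ℝ] W} {x : V}
    {L : ℝ} (hf : ∀ z, HasFDerivAt f (f' z) z) (hL : ∀ z, ‖f' z - f' x‖ ≤ L * ‖z - x‖) (y : V) :
    ‖f y - f x - f' x (y - x)‖ ≤ L / 2 * ‖y - x‖ ^ 2 := by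
  set v := y - x with hv
  let φ : ℝ → W := fun t => f (x + t • v) - f x - t • f' x v
  have hline (t : ℝ) : HasDerivAt (fun t : ℝ => x + t • v) v t := by
    simpa using ((hasDerivAt_id t).smul_const v).const_add x
  have hφ (t : ℝ) : HasDerivAt φ (f' (x + t • v) v - f' x v) t := by
    have hlin : HasDerivAt (fun t : ℝ => t • f' x v) (f' x v) t := by
      simpa using (hasDerivAt_id t).smul_const (f' x v)
    exact (((hf _).comp_hasDerivAt t (hline t)).sub_const (f x)).sub hlin
  have hbound (t : ℝ) : HasDerivAt (fun t => L / 2 * ‖v‖ ^ 2 * t ^ 2) (L * t * ‖v‖ ^ 2) t :=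
    ((hasDerivAt_pow 2 t).const_mul _).congr_deriv (by push_cast; ring)
  have hφ_le : ∀ t ∈ Ico (0 : ℝ) 1, ‖f' (x + t • v) v - f' x v‖ ≤ L * t * ‖v‖ ^ 2 := by
    intro t ht
    calc ‖f' (x + t • v) v - f' x v‖ ≤ ‖f' (x + t • v) - f' x‖ * ‖v‖ :=
          (f' (x + t • v) - f' x).le_opNorm v
      _ ≤ L * ‖x + t • v - x‖ * ‖v‖ := by gcongr; exact hL _
      _ = L * t * ‖v‖ ^ 2 := by
        rw [add_sub_cancel_left, norm_smul, Real.norm_of_nonneg ht.1]; ring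
  have key := image_norm_le_of_norm_deriv_right_le_deriv_boundary
    (fun t _ => (hφ t).continuousAt.continuousWithinAt) (fun t _ => (hφ t).hasDerivWithinAt)
    (by simp [φ]) hbound hφ_le (right_mem_Icc.2 zero_le_one)
  simpa [φ, hv] using key

end QuadraticBound

section BregmanStep

variable {H : Type*} [NormedAddCommGroup H] [InnerProductSpace ℝ H]

theorem bregD_three_point (K : H → ℝ) (K' : H → H) (x y z : H) :
    bregD K K' x z = bregD K K' x y + bregD K K' y z + ⟪K' y - K' x, z - y⟫ := by
  have hsplit : ⟪K' x, z - x⟫ = ⟪K' x, z - y⟫ + ⟪K' x, y - x⟫ := by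
    rw [← inner_add_right, sub_add_sub_cancel]
  simp only [bregD, hsplit, inner_sub_left]
  ring

theorem abs_bregD_le_of_lipschitz_gradient [CompleteSpace H] {f : H → ℝ} {f' : H → H} {L : ℝ}
    (hf : ∀ x, HasGradientAt f (f' x) x) (hlip : ∀ x y, ‖f' x - f' y‖ ≤ L * ‖x - y‖) (x y : H) :
    |bregD f f' x y| ≤ L / 2 * ‖y - x‖ ^ 2 := by
  refine norm_sub_sub_apply_le_of_norm_fderiv_sub_le (fun z => (hf z).hasFDerivAt) (fun z => ?_) y
  rw [← map_sub, LinearIsometryEquiv.norm_map]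
  exact hlip z x

/-- `K`, with gradient `K'`, is an admissible kernel of a Bregman proximal step: it is
`m`-strongly convex and its gradient is `M`-Lipschitz. Strong convexity is encoded by the
quadratic minorant at each point. -/
structure IsBregmanKernel [CompleteSpace H] (K : H → ℝ) (K' : H → H) (m M : ℝ) : Prop where
  hasGradientAt : ∀ y, HasGradientAt K (K' y) y
  strongConvex : ∀ y z, K y + ⟪K' y, z - y⟫ + m / 2 * ‖z - y‖ ^ 2 ≤ K z
  lipschitz : ∀ y z, ‖K' y - K' z‖ ≤ M * ‖y - z‖

namespace IsBregmanKernel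

variable [CompleteSpace H] {K : H → ℝ} {K' : H → H} {m M : ℝ}

theorem mono {m₀ M₀ : ℝ} (hK : IsBregmanKernel K K' m M) (hm : m₀ ≤ m) (hM : M ≤ M₀) :
    IsBregmanKernel K K' m₀ M₀ where
  hasGradientAt := hK.hasGradientAt
  strongConvex y z := le_trans (by gcongr) (hK.strongConvex y z)
  lipschitz y z := (hK.lipschitz y z).trans (by gcongr)

theorem le_bregD (hK : IsBregmanKernel K K' m M) (x y : H) :
    m / 2 * ‖y - x‖ ^ 2 ≤ bregD K K' x y := by
  unfold bregD
  linarith [hK.strongConvex x y]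

theorem bregD_le (hK : IsBregmanKernel K K' m M) (x y : H) :
    bregD K K' x y ≤ M / 2 * ‖y - x‖ ^ 2 :=
  (le_abs_self _).trans (abs_bregD_le_of_lipschitz_gradient hK.hasGradientAt hK.lipschitz x y)

end IsBregmanKernel

variable {f g K : H → ℝ} {f' K' : H → H} {ε : ℝ} {x y : H}

theorem add_bregD_le_of_mem_bregT (hy : y ∈ bregT f' g K K' ε x) (u : H) :
    f y + g y + bregD K K' x y / ε - bregD f f' x y ≤
      f u + g u + bregD K K' x u / ε - bregD f f' x u := by
  have hmin := hy u
  simp only [bregD] at hmin ⊢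
  linarith

/-- The proximal subgradient of `f + g` at `y` produced by a Bregman proximal step from `x`
to `y`, that is, by the optimality condition of the subproblem. -/
def bregSubgrad (f' K' : H → H) (ε : ℝ) (x y : H) : H :=
  f' y - f' x - ε⁻¹ • (K' y - K' x)

theorem add_inner_bregSubgrad_le_of_mem_bregT (hy : y ∈ bregT f' g K K' ε x) (z : H) :
    f y + g y + ⟪bregSubgrad f' K' ε x y, z - y⟫ + bregD f f' y z - bregD K K' y z / ε ≤
      f z + g z := by
  have hmin := add_bregD_le_of_mem_bregT (f := f) hy z
  rw [bregD_three_point f f' x y z, bregD_three_point K K' x y z] at hmin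
  rw [bregSubgrad, inner_sub_left, real_inner_smul_left]
  ring_nf at hmin ⊢
  linarith

variable {L M : ℝ}

theorem norm_bregSubgrad_le (hf' : ‖f' y - f' x‖ ≤ L * ‖y - x‖)
    (hK' : ‖K' y - K' x‖ ≤ M * ‖y - x‖) (hε : 0 < ε) :
    ‖bregSubgrad f' K' ε x y‖ ≤ (M / ε + L) * ‖y - x‖ := by
  calc ‖bregSubgrad f' K' ε x y‖ ≤ ‖f' y - f' x‖ + ‖ε⁻¹ • (K' y - K' x)‖ := norm_sub_le _ _
    _ = ‖f' y - f' x‖ + ε⁻¹ * ‖K' y - K' x‖ := by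
      rw [norm_smul, Real.norm_of_nonneg (inv_pos.2 hε).le]
    _ ≤ L * ‖y - x‖ + ε⁻¹ * (M * ‖y - x‖) := by gcongr
    _ = (M / ε + L) * ‖y - x‖ := by ring

variable [CompleteSpace H] {m : ℝ}

theorem add_mul_sq_le_of_mem_bregT (hf : ∀ x, HasGradientAt f (f' x) x)
    (hlip : ∀ x y, ‖f' x - f' y‖ ≤ L * ‖x - y‖) (hK : IsBregmanKernel K K' m M) (hε : 0 < ε)
    (hy : y ∈ bregT f' g K K' ε x) (u : H) :
    f y + g y + (m / ε - L) / 2 * ‖y - x‖ ^ 2 ≤ f u + g u + (M / ε + L) / 2 * ‖u - x‖ ^ 2 := by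
  have hKy : m / ε / 2 * ‖y - x‖ ^ 2 ≤ bregD K K' x y / ε := by
    rw [le_div_iff₀ hε]
    exact le_of_eq_of_le (by field_simp) (hK.le_bregD x y)
  have hKu : bregD K K' x u / ε ≤ M / ε / 2 * ‖u - x‖ ^ 2 := by
    rw [div_le_iff₀ hε]
    exact (hK.bregD_le x u).trans_eq (by field_simp)
  have hfy := (abs_le.1 (abs_bregD_le_of_lipschitz_gradient hf hlip x y)).2
  have hfu := (abs_le.1 (abs_bregD_le_of_lipschitz_gradient hf hlip x u)).1
  linarith [add_bregD_le_of_mem_bregT (f := f) hy u]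

theorem bregSubgrad_mem_proxSubdiff (hf : ∀ x, HasGradientAt f (f' x) x)
    (hlip : ∀ x y, ‖f' x - f' y‖ ≤ L * ‖x - y‖) (hK : IsBregmanKernel K K' m M) (hε : 0 < ε)
    (hy : y ∈ bregT f' g K K' ε x) :
    bregSubgrad f' K' ε x y ∈ proxSubdiff (fun z => f z + g z) y := by
  refine ⟨max (L / 2 + M / 2 / ε) 1, by positivity, 1, one_pos, fun z _ => ?_⟩
  have hfz := (abs_le.1 (abs_bregD_le_of_lipschitz_gradient hf hlip y z)).1
  have hKz : bregD K K' y z / ε ≤ M / 2 / ε * ‖z - y‖ ^ 2 := by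
    rw [div_le_iff₀ hε]
    exact (hK.bregD_le y z).trans_eq (by field_simp)
  have hρ : (L / 2 + M / 2 / ε) * ‖z - y‖ ^ 2 ≤ max (L / 2 + M / 2 / ε) 1 * ‖z - y‖ ^ 2 := by
    gcongr
    exact le_max_left _ _
  linarith [add_inner_bregSubgrad_le_of_mem_bregT (f := f) hy z]

end BregmanStep

section GeometricDecay

theorem le_div_pow_mul_pow_of_antitone {Δ : ℕ → ℝ} {β : ℝ} {k₀ : ℕ} (hanti : Antitone Δ)
    (hΔ₀ : 0 ≤ Δ 0) (hβ₀ : 0 < β) (hβ₁ : β ≤ 1) (hβ : ∀ k ≥ k₀, Δ (k + 1) ≤ β * Δ k) (k : ℕ) :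
    Δ k ≤ Δ 0 / β ^ k₀ * β ^ k := by
  rcases le_total k k₀ with hk | hk
  · calc Δ k ≤ Δ 0 := hanti k.zero_le
      _ = Δ 0 / β ^ k₀ * β ^ k₀ := by field_simp
      _ ≤ Δ 0 / β ^ k₀ * β ^ k :=
        mul_le_mul_of_nonneg_left (pow_le_pow_of_le_one hβ₀.le hβ₁ hk) (by positivity)
  · obtain ⟨n, rfl⟩ := Nat.exists_eq_add_of_le hk
    calc Δ (k₀ + n) ≤ β ^ n * Δ k₀ :=
          le_geom (u := fun i => Δ (k₀ + i)) hβ₀.le n fun i _ => hβ (k₀ + i) (k₀.le_add_right i)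
      _ ≤ β ^ n * Δ 0 := by gcongr; exact hanti k₀.zero_le
      _ = Δ 0 / β ^ k₀ * β ^ (k₀ + n) := by rw [pow_add]; field_simp

theorem dist_le_sqrt_pow_of_sufficient_decrease {X : Type*} [PseudoMetricSpace X] {x : ℕ → X}
    {xbar : X} {Δ : ℕ → ℝ} {a A β : ℝ} (ha : 0 < a) (hβ₀ : 0 ≤ β) (hβ₁ : β < 1)
    (hΔ : ∀ k, 0 ≤ Δ k) (hdec : ∀ k, Δ (k + 1) + a * dist (x k) (x (k + 1)) ^ 2 ≤ Δ k)
    (hgeo : ∀ k, Δ k ≤ A * β ^ k) (hlim : Tendsto x atTop (𝓝 xbar)) (k : ℕ) :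
    dist (x k) xbar ≤ √(A / a) / (1 - √β) * √β ^ k := by
  have hsqrt : √β < 1 := by rwa [Real.sqrt_lt' one_pos, one_pow]
  have hA : 0 ≤ A := (hΔ 0).trans (by simpa using hgeo 0)
  have hstep (n : ℕ) : dist (x n) (x (n + 1)) ≤ √(A / a) * √β ^ n := by
    refine le_of_sq_le_sq ?_ (by positivity)
    rw [mul_pow, Real.sq_sqrt (div_nonneg hA ha.le), pow_right_comm, Real.sq_sqrt hβ₀,
      div_mul_eq_mul_div, le_div_iff₀ ha]
    linarith [hdec n, hΔ (n + 1), hgeo n]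
  exact (dist_le_of_le_geometric_of_tendsto _ _ hsqrt hstep hlim k).trans_eq (by ring)

theorem le_mul_infDist_sq {X : Type*} [PseudoMetricSpace X] {S : Set X} {x : X} {δ b : ℝ}
    (hS : S.Nonempty) (hb : 0 ≤ b) (h : ∀ u ∈ S, δ ≤ b * dist x u ^ 2) :
    δ ≤ b * infDist x S ^ 2 := by
  have hlim : Tendsto (fun r : ℝ => b * r ^ 2) (𝓝[>] infDist x S) (𝓝 (b * infDist x S ^ 2)) :=
    (by fun_prop : Continuous fun r : ℝ => b * r ^ 2).continuousWithinAt
  refine ge_of_tendsto hlim ?_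
  filter_upwards [self_mem_nhdsWithin] with r hr
  obtain ⟨u, huS, hu⟩ := (infDist_lt_iff hS).1 hr
  exact (h u huS).trans (by gcongr)

end GeometricDecay

section ErrorBound

variable {H : Type*} [NormedAddCommGroup H] [InnerProductSpace ℝ H]

/-- The level-set subdifferential error bound of `F` at `xbar` with exponent `γ` and constant
`c₃`, on the set `𝔅(xbar; η, ν)` of points `y` with `‖y - xbar‖ < η` and
`F xbar < F y < F xbar + ν`. -/
def LevelSetErrorBound (F : H → ℝ) (xbar : H) (γ η ν c₃ : ℝ) : Prop :=
  ∀ y, ‖y - xbar‖ < η → F xbar < F y → F y < F xbar + ν → ∀ ξ ∈ proxSubdiff F y,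
    infDist y {z | F z ≤ F xbar} ^ γ ≤ c₃ * ‖ξ‖

theorem LevelSetErrorBound.infDist_le {F : H → ℝ} {xbar y ξ : H} {γ η ν c₃ : ℝ}
    (hEB : LevelSetErrorBound F xbar γ η ν c₃) (hγ : γ ≤ 1) (hyη : ‖y - xbar‖ < η)
    (hy₁ : ‖y - xbar‖ ≤ 1) (hy : F xbar < F y) (hyν : F y < F xbar + ν)
    (hξ : ξ ∈ proxSubdiff F y) :
    infDist y {z | F z ≤ F xbar} ≤ c₃ * ‖ξ‖ := by
  have hle : infDist y {z | F z ≤ F xbar} ≤ ‖y - xbar‖ := by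
    rw [← dist_eq_norm]
    exact infDist_le_dist_of_mem (le_refl (F xbar))
  exact (Real.self_le_rpow_of_le_one infDist_nonneg (hle.trans hy₁) hγ).trans
    (hEB y hyη hy hyν ξ hξ)

/-- The properties of a proximal-type descent method for `F` on which its rate of convergence
depends: a decrease estimate against every competitor `u` (not only `u = x k`), and a proximal
subgradient at the new point controlled by the length of the step. -/
structure IsProxDescentSeq (F : H → ℝ) (a b c : ℝ) (x : ℕ → H) : Prop where
  a_pos : 0 < a
  b_pos : 0 < b
  c_nonneg : 0 ≤ c
  add_mul_sq_le : ∀ k u, F (x (k + 1)) + a * ‖x (k + 1) - x k‖ ^ 2 ≤ F u + b * ‖u - x k‖ ^ 2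
  exists_proxSubgrad : ∀ k, ∃ ξ ∈ proxSubdiff F (x (k + 1)), ‖ξ‖ ≤ c * ‖x (k + 1) - x k‖

namespace IsProxDescentSeq

variable {F : H → ℝ} {a b c : ℝ} {x : ℕ → H} {xbar : H}

theorem sufficient_decrease (hx : IsProxDescentSeq F a b c x) (k : ℕ) :
    F (x (k + 1)) + a * ‖x (k + 1) - x k‖ ^ 2 ≤ F (x k) := by
  simpa using hx.add_mul_sq_le k (x k)

theorem antitone (hx : IsProxDescentSeq F a b c x) : Antitone fun k => F (x k) :=
  antitone_nat_of_succ_le fun k => by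
    have := hx.a_pos
    exact le_trans (le_add_of_nonneg_right (by positivity)) (hx.sufficient_decrease k)

theorem tendsto_apply (hx : IsProxDescentSeq F a b c x) (hF : LowerSemicontinuousAt F xbar)
    (hlim : Tendsto x atTop (𝓝 xbar)) : Tendsto (fun k => F (x k)) atTop (𝓝 (F xbar)) := by
  have hupper : Tendsto (fun k => F xbar + b * ‖xbar - x k‖ ^ 2) atTop (𝓝 (F xbar)) := by
    simpa using ((((hlim.const_sub xbar).norm).pow 2).const_mul b).const_add (F xbar)
  have hsucc (k : ℕ) : F (x (k + 1)) ≤ F xbar + b * ‖xbar - x k‖ ^ 2 := by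
    have := hx.a_pos
    exact le_trans (le_add_of_nonneg_right (by positivity)) (hx.add_mul_sq_le k xbar)
  refine (tendsto_add_atTop_iff_nat 1).1 (tendsto_order.2 ⟨fun r hr => ?_, fun r hr => ?_⟩)
  · exact (hlim.comp (tendsto_add_atTop_nat 1)).eventually (hF r hr)
  · exact (hupper.eventually (gt_mem_nhds hr)).mono fun k hk => (hsucc k).trans_lt hk

theorem le_apply (hx : IsProxDescentSeq F a b c x) (hF : LowerSemicontinuousAt F xbar)
    (hlim : Tendsto x atTop (𝓝 xbar)) (k : ℕ) : F xbar ≤ F (x k) :=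
  hx.antitone.le_of_tendsto (hx.tendsto_apply hF hlim) k

theorem sub_le_mul_infDist_sq (hx : IsProxDescentSeq F a b c x) (xbar : H) (k : ℕ) :
    F (x (k + 1)) - F xbar ≤ b * infDist (x k) {z | F z ≤ F xbar} ^ 2 := by
  refine le_mul_infDist_sq ⟨xbar, le_refl (F xbar)⟩ hx.b_pos.le fun u (hu : F u ≤ F xbar) => ?_
  have hstep : 0 ≤ a * ‖x (k + 1) - x k‖ ^ 2 := by
    have := hx.a_pos
    positivity
  rw [dist_comm, dist_eq_norm]
  linarith [hx.add_mul_sq_le k u]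

theorem sub_le_mul_step_sq (hx : IsProxDescentSeq F a b c x) {κ : ℝ} {k : ℕ}
    (h : infDist (x (k + 1)) {z | F z ≤ F xbar} ≤ κ * ‖x (k + 1) - x k‖) :
    F (x (k + 1)) - F xbar ≤ b * ((1 + κ) * ‖x (k + 1) - x k‖) ^ 2 := by
  have hprev : infDist (x k) {z | F z ≤ F xbar} ≤ (1 + κ) * ‖x (k + 1) - x k‖ := by
    calc infDist (x k) {z | F z ≤ F xbar}
        ≤ infDist (x (k + 1)) {z | F z ≤ F xbar} + dist (x k) (x (k + 1)) :=
          infDist_le_infDist_add_dist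
      _ ≤ κ * ‖x (k + 1) - x k‖ + ‖x (k + 1) - x k‖ := by
        rw [dist_comm, dist_eq_norm]
        gcongr
      _ = (1 + κ) * ‖x (k + 1) - x k‖ := by ring
  have := hx.b_pos
  exact (hx.sub_le_mul_infDist_sq xbar k).trans (by gcongr; exact infDist_nonneg)

theorem sub_le_mul_sub_of_infDist_le (hx : IsProxDescentSeq F a b c x) {κ : ℝ} {k : ℕ}
    (h : infDist (x (k + 1)) {z | F z ≤ F xbar} ≤ κ * ‖x (k + 1) - x k‖) :
    F (x (k + 1)) - F xbar ≤ b * (1 + κ) ^ 2 / a * (F (x k) - F (x (k + 1))) := by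
  have ha := hx.a_pos
  have hb := hx.b_pos
  calc F (x (k + 1)) - F xbar ≤ b * ((1 + κ) * ‖x (k + 1) - x k‖) ^ 2 := hx.sub_le_mul_step_sq h
    _ = b * (1 + κ) ^ 2 / a * (a * ‖x (k + 1) - x k‖ ^ 2) := by field_simp
    _ ≤ b * (1 + κ) ^ 2 / a * (F (x k) - F (x (k + 1))) := by
      gcongr
      linarith [hx.sufficient_decrease k]

variable {γ η ν c₃ : ℝ}

theorem eventually_sub_le_mul_sub (hx : IsProxDescentSeq F a b c x)
    (hF : LowerSemicontinuousAt F xbar) (hlim : Tendsto x atTop (𝓝 xbar)) (hγ : γ ≤ 1)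
    (hη : 0 < η) (hν : 0 < ν) (hc₃ : 0 ≤ c₃) (hEB : LevelSetErrorBound F xbar γ η ν c₃) :
    ∀ᶠ k in atTop,
      F (x (k + 1)) - F xbar ≤ b * (1 + c₃ * c) ^ 2 / a * (F (x k) - F (x (k + 1))) := by
  have hball : ∀ᶠ k in atTop, ‖x k - xbar‖ < min η 1 := by
    simpa only [dist_eq_norm] using
      hlim.eventually (ball_mem_nhds xbar (lt_min hη one_pos))
  have hval : ∀ᶠ k in atTop, F (x k) < F xbar + ν :=
    (hx.tendsto_apply hF hlim).eventually (gt_mem_nhds (lt_add_of_pos_right _ hν))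
  filter_upwards [(tendsto_add_atTop_nat 1).eventually (hball.and hval)] with k ⟨hk, hkν⟩
  apply hx.sub_le_mul_sub_of_infDist_le
  rcases (hx.le_apply hF hlim (k + 1)).eq_or_lt with heq | hlt
  · rw [infDist_zero_of_mem (show x (k + 1) ∈ {z | F z ≤ F xbar} from heq.ge)]
    have := hx.c_nonneg
    positivity
  · obtain ⟨ξ, hξ, hξc⟩ := hx.exists_proxSubgrad k
    calc infDist (x (k + 1)) {z | F z ≤ F xbar}
        ≤ c₃ * ‖ξ‖ := hEB.infDist_le hγ (hk.trans_le (min_le_left _ _))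
          (hk.le.trans (min_le_right _ _)) hlt hkν hξ
      _ ≤ c₃ * (c * ‖x (k + 1) - x k‖) := by gcongr
      _ = c₃ * c * ‖x (k + 1) - x k‖ := by ring

theorem exists_contraction (hx : IsProxDescentSeq F a b c x)
    (hF : LowerSemicontinuousAt F xbar) (hlim : Tendsto x atTop (𝓝 xbar)) (hγ : γ ≤ 1)
    (hη : 0 < η) (hν : 0 < ν) (hc₃ : 0 ≤ c₃) (hEB : LevelSetErrorBound F xbar γ η ν c₃) :
    ∃ β : ℝ, 0 < β ∧ β < 1 ∧ ∃ k₀ : ℕ, ∀ k ≥ k₀,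
      F (x (k + 1)) - F xbar ≤ β * (F (x k) - F xbar) := by
  obtain ⟨k₀, hk₀⟩ := eventually_atTop.1
    (hx.eventually_sub_le_mul_sub hF hlim hγ hη hν hc₃ hEB)
  set θ := b * (1 + c₃ * c) ^ 2 / a
  have hθ : 0 < θ := by
    have := hx.a_pos
    have := hx.b_pos
    have := hx.c_nonneg
    positivity
  refine ⟨θ / (1 + θ), by positivity, (div_lt_one (by positivity)).2 (lt_one_add θ), k₀,
    fun k hk => ?_⟩
  rw [div_mul_eq_mul_div, le_div_iff₀ (by positivity)]
  linarith [hk₀ k hk]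

theorem linear_convergence (hx : IsProxDescentSeq F a b c x)
    (hF : LowerSemicontinuousAt F xbar) (hlim : Tendsto x atTop (𝓝 xbar)) (hγ : γ ≤ 1)
    (hη : 0 < η) (hν : 0 < ν) (hc₃ : 0 ≤ c₃) (hEB : LevelSetErrorBound F xbar γ η ν c₃) :
    ∃ β : ℝ, 0 < β ∧ β < 1 ∧ ∃ k₀ : ℕ, ∃ C : ℝ, 0 < C ∧
      (∀ k ≥ k₀, F (x (k + 1)) - F xbar ≤ β * (F (x k) - F xbar)) ∧
      Summable (fun k => F (x k) - F xbar) ∧ ∀ k, ‖x k - xbar‖ ≤ C * √β ^ k := by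
  obtain ⟨β, hβ₀, hβ₁, k₀, hβ⟩ := hx.exists_contraction hF hlim hγ hη hν hc₃ hEB
  have hgap (k : ℕ) : 0 ≤ F (x k) - F xbar := sub_nonneg.2 (hx.le_apply hF hlim k)
  have hgeo := le_div_pow_mul_pow_of_antitone
    (fun i j hij => sub_le_sub_right (hx.antitone hij) (F xbar)) (hgap 0) hβ₀ hβ₁.le hβ
  have hdec (k : ℕ) :
      F (x (k + 1)) - F xbar + a * dist (x k) (x (k + 1)) ^ 2 ≤ F (x k) - F xbar := by
    rw [dist_comm, dist_eq_norm]
    linarith [hx.sufficient_decrease k]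
  have hdist := dist_le_sqrt_pow_of_sufficient_decrease hx.a_pos hβ₀.le hβ₁ hgap hdec hgeo hlim
  have hsqrt : 0 < 1 - √β := by rwa [sub_pos, Real.sqrt_lt' one_pos, one_pow]
  refine ⟨β, hβ₀, hβ₁, k₀, √((F (x 0) - F xbar) / β ^ k₀ / a) / (1 - √β) + 1, by positivity, hβ,
    ?_, fun k => ?_⟩
  · exact Summable.of_nonneg_of_le hgap hgeo
      ((summable_geometric_of_lt_one hβ₀.le hβ₁).mul_left _)
  · rw [← dist_eq_norm]
    exact (hdist k).trans (by gcongr; exact le_add_of_nonneg_right zero_le_one)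

end IsProxDescentSeq

variable [CompleteSpace H] {f g : H → ℝ} {f' : H → H} {L : ℝ} {K : ℕ → H → ℝ} {K' : ℕ → H → H}
  {ε : ℕ → ℝ} {εlo εhi m M : ℝ} {x : ℕ → H}

theorem isProxDescentSeq_of_mem_bregT (hL : 0 ≤ L) (hf : ∀ x, HasGradientAt f (f' x) x)
    (hlip : ∀ x y, ‖f' x - f' y‖ ≤ L * ‖x - y‖) (hM : 0 < M)
    (hK : ∀ k, IsBregmanKernel (K k) (K' k) m M) (hεlo : 0 < εlo) (hεhi : εhi * L < m)
    (hε : ∀ k, ε k ∈ Icc εlo εhi) (hx : ∀ k, x (k + 1) ∈ bregT f' g (K k) (K' k) (ε k) (x k)) :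
    IsProxDescentSeq (fun z => f z + g z) ((m / εhi - L) / 2) ((M / εlo + L) / 2)
      (M / εlo + L) x := by
  have hε₀ (k : ℕ) : 0 < ε k := hεlo.trans_le (hε k).1
  have hεhi₀ : 0 < εhi := (hε₀ 0).trans_le (hε 0).2
  have hm : 0 ≤ m := (mul_nonneg hεhi₀.le hL).trans hεhi.le
  refine ⟨?_, by positivity, by positivity, fun k u => ?_, fun k => ?_⟩
  · rw [mul_comm, ← lt_div_iff₀ hεhi₀] at hεhi
    linarith
  · calc f (x (k + 1)) + g (x (k + 1)) + (m / εhi - L) / 2 * ‖x (k + 1) - x k‖ ^ 2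
        ≤ f (x (k + 1)) + g (x (k + 1)) + (m / ε k - L) / 2 * ‖x (k + 1) - x k‖ ^ 2 := by
          gcongr
          · exact hε₀ k
          · exact (hε k).2
      _ ≤ f u + g u + (M / ε k + L) / 2 * ‖u - x k‖ ^ 2 :=
        add_mul_sq_le_of_mem_bregT hf hlip (hK k) (hε₀ k) (hx k) u
      _ ≤ f u + g u + (M / εlo + L) / 2 * ‖u - x k‖ ^ 2 := by
        gcongr
        exact (hε k).1
  · refine ⟨_, bregSubgrad_mem_proxSubdiff hf hlip (hK k) (hε₀ k) (hx k), ?_⟩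
    calc ‖bregSubgrad f' (K' k) (ε k) (x k) (x (k + 1))‖
        ≤ (M / ε k + L) * ‖x (k + 1) - x k‖ :=
          norm_bregSubgrad_le (hlip _ _) ((hK k).lipschitz _ _) (hε₀ k)
      _ ≤ (M / εlo + L) * ‖x (k + 1) - x k‖ := by
        gcongr
        exact (hε k).1

theorem stmt12_general (hL : 0 ≤ L) (hf : ∀ x, HasGradientAt f (f' x) x)
    (hlip : ∀ x y, ‖f' x - f' y‖ ≤ L * ‖x - y‖) (hM : 0 < M)
    (hK : ∀ k, IsBregmanKernel (K k) (K' k) m M) (hεlo : 0 < εlo) (hεhi : εhi * L < m)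
    (hε : ∀ k, ε k ∈ Icc εlo εhi) (hx : ∀ k, x (k + 1) ∈ bregT f' g (K k) (K' k) (ε k) (x k))
    {xbar : H} (hg : LowerSemicontinuousAt g xbar) (hlim : Tendsto x atTop (𝓝 xbar))
    {γ η ν c₃ : ℝ} (hγ : γ ≤ 1) (hη : 0 < η) (hν : 0 < ν) (hc₃ : 0 ≤ c₃)
    (hEB : LevelSetErrorBound (fun z => f z + g z) xbar γ η ν c₃) :
    ∃ β : ℝ, 0 < β ∧ β < 1 ∧ ∃ k₀ : ℕ, ∃ C : ℝ, 0 < C ∧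
      (∀ k ≥ k₀, f (x (k + 1)) + g (x (k + 1)) - (f xbar + g xbar) ≤
        β * (f (x k) + g (x k) - (f xbar + g xbar))) ∧
      Summable (fun k => f (x k) + g (x k) - (f xbar + g xbar)) ∧
      ∀ k, ‖x k - xbar‖ ≤ C * √β ^ k :=
  (isProxDescentSeq_of_mem_bregT hL hf hlip hM hK hεlo hεhi hε hx).linear_convergence
    ((hf xbar).continuousAt.lowerSemicontinuousAt.add hg) hlim hγ hη hν hc₃ hEB

end ErrorBound

/-- Q-linear convergence of the values and R-linear convergence of the iterates of VBPG
under a level-set subdifferential error bound at the limit point. -/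
theorem stmt12
    (f g : E → ℝ) (f' : E → E) (L : ℝ)
    (hL : 0 < L)
    (hf : ∀ x, HasGradientAt f (f' x) x)
    (hlip : ∀ x y, ‖f' x - f' y‖ ≤ L * ‖x - y‖)
    (hg : Continuous g)
    (hlevel : ∀ r : ℝ, Bornology.IsBounded {x : E | f x + g x ≤ r})
    (Kk : ℕ → E → ℝ) (Kk' : ℕ → E → E) (mk Mk : ℕ → ℝ) (εk : ℕ → ℝ) (εlo εhi : ℝ)
    (x : ℕ → E) (m M : ℝ) (hm : 0 < m) (hmM : m ≤ M)
    (hmk : ∀ k, m ≤ mk k) (hMk : ∀ k, Mk k ≤ M)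
    (hKk : ∀ k y, HasGradientAt (Kk k) (Kk' k y) y)
    (hKkstrong : ∀ k (y z : E), Kk k y + ⟪Kk' k y, z - y⟫ + mk k / 2 * ‖z - y‖ ^ 2 ≤ Kk k z)
    (hKklip : ∀ k (y z : E), ‖Kk' k y - Kk' k z‖ ≤ Mk k * ‖y - z‖)
    (hεlo : 0 < εlo) (hεle : εlo ≤ εhi) (hεhi : εhi * L < m)
    (hεk : ∀ k, εk k ∈ Set.Icc εlo εhi)
    (hiter : ∀ k, x (k+1) ∈ bregT f' g (Kk k) (Kk' k) (εk k) (x k))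
    (xbar : E) (hlim : Tendsto x atTop (nhds xbar))
    (γ η ν c₃ : ℝ)
    (hγ0 : 0 < γ) (hγ1 : γ ≤ 1) (hη : 0 < η) (hν : 0 < ν) (hc₃ : 0 < c₃)
    (hEB : ∀ y : E, ‖y - xbar‖ < η → f xbar + g xbar < f y + g y →
      f y + g y < f xbar + g xbar + ν →
      ∀ ξ ∈ proxSubdiff (fun z => f z + g z) y,
        Metric.infDist y {z : E | f z + g z ≤ f xbar + g xbar} ^ γ ≤ c₃ * ‖ξ‖) :
    ∃ β : ℝ, 0 < β ∧ β < 1 ∧ ∃ k₀ : ℕ, ∃ C : ℝ, 0 < C ∧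
      (∀ k ≥ k₀, f (x (k+1)) + g (x (k+1)) - (f xbar + g xbar) ≤
        β * (f (x k) + g (x k) - (f xbar + g xbar))) ∧
      Summable (fun k => f (x k) + g (x k) - (f xbar + g xbar)) ∧
      (∀ k, ‖x k - xbar‖ ≤ C * Real.sqrt β ^ k) :=
  stmt12_general hL.le hf hlip (hm.trans_le hmM)
    (fun k => IsBregmanKernel.mono ⟨hKk k, hKkstrong k, hKklip k⟩ (hmk k) (hMk k)) hεlo hεhi
    hεk hiter hg.continuousAt.lowerSemicontinuousAt hlim hγ1 hη hν hc₃.le hEB
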